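/- Let P be a finite poset which can be partitioned into two nonempty sets P_1 and P_2 such that every element of P_1 is incomparable to every element of P_2 (each P_i carrying the order induced from P). Then c_⋆(P) = min{ c_⋆(P_1), c_⋆(P_2) }. -/

import Mathlib

open Classical in
/-- The finset of all antichains (including the empty antichain) of a finite poset `P`. -/
noncomputable def antichains (P : Type*) [Fintype P] [PartialOrder P] : Finset (Finset P) :=
  Finset.univ.filter (fun A => IsAntichain (· ≤ ·) (A : Set P))

/-- The upper shadow `∂_Q S` of an antichain `S` of `P` inside a subset `Q ⊆ P`. -/
def upperShadow {P : Type*} [PartialOrder P] (Q : Set P) (S : Set P) : Set P :=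
  {y | y ∈ Q ∧ (∃ x ∈ S, x ≤ y) ∧ ∀ z ∈ Q, z < y → ∀ x ∈ S, ¬ x ≤ z}

open Classical in
/-- The antichains of the subposet `Q ⊆ P`, i.e. antichains of `P` contained in `Q`. -/
noncomputable def antichainsIn {P : Type*} [Fintype P] [PartialOrder P] (Q : Set P) :
    Finset (Finset P) :=
  (antichains P).filter (fun A => (A : Set P) ⊆ Q)

/-- A weighting `α ∈ Δ_{a(P)}`: a nonnegative function on the antichains of `P`
(extended by `0` off the antichains) summing to `1`. -/
def IsWeighting {P : Type*} [Fintype P] [PartialOrder P] (α : Finset P → ℝ) : Prop :=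
  (∀ A ∈ antichains P, 0 ≤ α A) ∧ (∀ A ∉ antichains P, α A = 0) ∧
    ∑ A ∈ antichains P, α A = 1

open Classical in
/-- The shadow weighting `∂_Q(α)`: the coordinate of `∂_Q(α)` at an antichain `T` of `Q`
is the sum of `α` over all antichains of `P` whose upper shadow in `Q` is `T`. -/
noncomputable def shadowWeight {P : Type*} [Fintype P] [PartialOrder P]
    (α : Finset P → ℝ) (Q : Set P) (T : Finset P) : ℝ :=
  ∑ A ∈ (antichains P).filter (fun B : Finset P => upperShadow Q (B : Set P) = (T : Set P)), α A

/-- The critical exponent `c_{α,P}(Q) = H_{a(Q)}(∂_Q(α)) / |Q|` of a subposet `Q` of `P`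
with respect to a weighting `α` (natural logarithm; `0 log 0 = 0`). -/
noncomputable def critExp {P : Type*} [Fintype P] [PartialOrder P]
    (α : Finset P → ℝ) (Q : Set P) : ℝ :=
  (∑ T ∈ antichainsIn Q, -(shadowWeight α Q T * Real.log (shadowWeight α Q T))) /
    (Q.ncard : ℝ)

/-- The critical exponent `c_⋆(P) = max_{α ∈ Δ_{a(P)}} min_{∅ ≠ Q ⊆ P} c_{α,P}(Q)`,
expressed as `sup {c ≥ 0 : ∃ α ∈ Δ_{a(P)}, ∀ ∅ ≠ Q ⊆ P, c ≤ c_{α,P}(Q)}`. -/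
noncomputable def critStar (P : Type*) [Fintype P] [PartialOrder P] : ℝ :=
  sSup {c : ℝ | 0 ≤ c ∧ ∃ α : Finset P → ℝ, IsWeighting α ∧
    ∀ Q : Set P, Q.Nonempty → c ≤ critExp α Q}

/-!
If `L` is a lower set of `P`, then `L ∩ ∂_Q S = ∂_{Q ∩ L} (S ∩ L)`, so pushing a weighting of `P`
forward along `S ↦ S ∩ L` preserves the critical exponent of every `Q ⊆ L`; hence
`c_⋆(P) ≤ c_⋆(L)`. In a disjoint union both summands are lower sets, and antichains are pairs of
antichains. The product of weightings of the summands has shadow weightings which are again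
products, so entropies add, and `c_{α,P}(Q)` is a weighted mean of the critical exponents of the two
traces of `Q`.
-/

open Real

theorem csSup_inter_eq_min {γ : Type*} [ConditionallyCompleteLinearOrder γ] {s t : Set γ} {a : γ}
    (hs : s.OrdConnected) (ht : t.OrdConnected) (has : IsLeast s a) (hat : IsLeast t a)
    (hs' : BddAbove s) (ht' : BddAbove t) : sSup (s ∩ t) = min (sSup s) (sSup t) := by
  have hst : s ⊆ t ∨ t ⊆ s := by
    refine or_iff_not_imp_left.2 fun h y hy => ?_
    obtain ⟨x, hxs, hxt⟩ := Set.not_subset.1 h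
    have hyx : y ≤ x := le_of_not_ge fun hxy => hxt (ht.out hat.1 hy ⟨has.2 hxs, hxy⟩)
    exact hs.out has.1 hxs ⟨hat.2 hy, hyx⟩
  rcases hst with h | h
  · rw [Set.inter_eq_left.2 h, min_eq_left (csSup_le_csSup ht' ⟨a, has.1⟩ h)]
  · rw [Set.inter_eq_right.2 h, min_eq_right (csSup_le_csSup hs' ⟨a, hat.1⟩ h)]

theorem ncard_preimage_inl_add_ncard_preimage_inr {α β : Type*} {Q : Set (α ⊕ β)}
    (hQ : Q.Finite) : (Sum.inl ⁻¹' Q).ncard + (Sum.inr ⁻¹' Q).ncard = Q.ncard := by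
  conv_rhs =>
    rw [← Set.image_preimage_inl_union_image_preimage_inr Q,
      Set.ncard_union_eq Set.disjoint_image_inl_image_inr
        (hQ.subset (Set.image_preimage_subset _ _)) (hQ.subset (Set.image_preimage_subset _ _)),
      Set.ncard_image_of_injective _ Sum.inl_injective,
      Set.ncard_image_of_injective _ Sum.inr_injective]

theorem coe_toLeft {α β : Type*} (A : Finset (α ⊕ β)) :
    (A.toLeft : Set α) = Sum.inl ⁻¹' (A : Set (α ⊕ β)) :=
  Set.ext fun _ => Finset.mem_toLeft

theorem coe_toRight {α β : Type*} (A : Finset (α ⊕ β)) :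
    (A.toRight : Set β) = Sum.inr ⁻¹' (A : Set (α ⊕ β)) :=
  Set.ext fun _ => Finset.mem_toRight

section Entropy

variable {ι κ ι' κ' : Type*} [Fintype ι] [Fintype κ] [Fintype ι'] [Fintype κ']

theorem stdSimplex_map_apply_eq_zero {f : ι → κ} {w : stdSimplex ℝ ι} {b : κ}
    (h : ∀ a, f a = b → w a = 0) : stdSimplex.map f w b = 0 := by
  classical
  rw [stdSimplex.map_coe, FunOnFinite.linearMap_apply_apply]
  exact Finset.sum_eq_zero fun a ha => h a (Finset.mem_filter.1 ha).2

theorem stdSimplex_map_apply_of_injective {f : ι → κ} (hf : Function.Injective f)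
    (w : stdSimplex ℝ ι) (a : ι) : stdSimplex.map f w (f a) = w a := by
  classical
  rw [stdSimplex.map_coe, FunOnFinite.linearMap_apply_apply]
  simp only [hf.eq_iff, Finset.sum_filter, Finset.sum_ite_eq', Finset.mem_univ, if_true]

/-- The product of two weightings, i.e. the law of a pair of independent random variables. -/
def prodWeighting (v : stdSimplex ℝ ι) (w : stdSimplex ℝ κ) : stdSimplex ℝ (ι × κ) :=
  ⟨fun p => v p.1 * w p.2, fun p => mul_nonneg (v.2.1 p.1) (w.2.1 p.2), by
    simp only [Fintype.sum_prod_type, ← Finset.mul_sum, stdSimplex.sum_eq_one, mul_one]⟩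

theorem prodWeighting_apply (v : stdSimplex ℝ ι) (w : stdSimplex ℝ κ) (p : ι × κ) :
    prodWeighting v w p = v p.1 * w p.2 :=
  rfl

theorem map_prodMap_prodWeighting (f : ι → ι') (g : κ → κ') (v : stdSimplex ℝ ι)
    (w : stdSimplex ℝ κ) :
    stdSimplex.map (Prod.map f g) (prodWeighting v w) =
      prodWeighting (stdSimplex.map f v) (stdSimplex.map g w) := by
  classical
  ext ⟨i, k⟩
  simp only [stdSimplex.map_coe, prodWeighting_apply, FunOnFinite.linearMap_apply_apply,
    Finset.sum_mul_sum, ← Finset.sum_product', ← Finset.filter_product, Finset.univ_product_univ]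
  exact Finset.sum_congr (by simp only [Prod.map, Prod.mk.injEq]) fun p _ =>
    prodWeighting_apply v w p

/-- The Shannon entropy `H(w) = -∑ w log w`, in natural units. -/
noncomputable def shannonEntropy (w : stdSimplex ℝ ι) : ℝ :=
  ∑ i, negMulLog (w i)

theorem shannonEntropy_nonneg (w : stdSimplex ℝ ι) : 0 ≤ shannonEntropy w :=
  Finset.sum_nonneg fun i _ => negMulLog_nonneg (stdSimplex.zero_le w i) (stdSimplex.le_one w i)

theorem shannonEntropy_le_log_card (w : stdSimplex ℝ ι) :
    shannonEntropy w ≤ log (Fintype.card ι) := by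
  have : Nonempty ι := by
    by_contra! h
    exact zero_ne_one ((Fintype.sum_empty w).symm.trans (stdSimplex.sum_eq_one w))
  set n : ℝ := (Fintype.card ι : ℝ) with hn
  have hn₀ : 0 < n := Nat.cast_pos.2 Fintype.card_pos
  have jensen : ∑ i, n⁻¹ • negMulLog (w i) ≤ negMulLog (∑ i, n⁻¹ • w i) :=
    concaveOn_negMulLog.le_map_sum (fun _ _ => inv_nonneg.2 hn₀.le)
      (by rw [Finset.sum_const, Finset.card_univ, nsmul_eq_mul, ← hn, mul_inv_cancel₀ hn₀.ne'])
      fun i _ => stdSimplex.zero_le w i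
  rw [← Finset.smul_sum, ← Finset.smul_sum, stdSimplex.sum_eq_one, smul_eq_mul, smul_eq_mul,
    mul_one, negMulLog, log_inv, neg_mul_neg] at jensen
  exact le_of_mul_le_mul_left jensen (inv_pos.2 hn₀)

theorem shannonEntropy_map_of_injective {f : ι → κ} (hf : Function.Injective f)
    (w : stdSimplex ℝ ι) : shannonEntropy (stdSimplex.map f w) = shannonEntropy w := by
  refine (Fintype.sum_of_injective f hf _ _ (fun b hb => ?_) fun a => ?_).symm
  · rw [stdSimplex_map_apply_eq_zero fun a ha => (hb ⟨a, ha⟩).elim, negMulLog_zero]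
  · rw [stdSimplex_map_apply_of_injective hf]

theorem shannonEntropy_prodWeighting (v : stdSimplex ℝ ι) (w : stdSimplex ℝ κ) :
    shannonEntropy (prodWeighting v w) = shannonEntropy v + shannonEntropy w := by
  simp only [shannonEntropy, prodWeighting_apply, negMulLog_mul, Fintype.sum_prod_type,
    Finset.sum_add_distrib, ← Finset.sum_mul, ← Finset.mul_sum, stdSimplex.sum_eq_one, one_mul]

end Entropy

theorem isLowerSet_range_inl {α β : Type*} [LE α] [LE β] :
    IsLowerSet (Set.range (Sum.inl : α → α ⊕ β)) := by
  rintro _ (b | b) hb ⟨a, rfl⟩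
  · exact ⟨b, rfl⟩
  · exact (Sum.not_inr_le_inl hb).elim

theorem isLowerSet_range_inr {α β : Type*} [LE α] [LE β] :
    IsLowerSet (Set.range (Sum.inr : β → α ⊕ β)) := by
  rintro _ (b | b) hb ⟨a, rfl⟩
  · exact (Sum.not_inl_le_inr hb).elim
  · exact ⟨b, rfl⟩

/-- `Sum.inl` as an order embedding. -/
def inlOrderEmbedding (α β : Type*) [LE α] [LE β] : α ↪o α ⊕ β :=
  RelEmbedding.sumLiftRelInl (· ≤ ·) (· ≤ ·)

/-- `Sum.inr` as an order embedding. -/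
def inrOrderEmbedding (α β : Type*) [LE α] [LE β] : β ↪o α ⊕ β :=
  RelEmbedding.sumLiftRelInr (· ≤ ·) (· ≤ ·)

section UpperShadow

variable {α P : Type*} [PartialOrder α] [PartialOrder P]

theorem isAntichain_upperShadow (Q S : Set P) : IsAntichain (· ≤ ·) (upperShadow Q S) := by
  rintro x ⟨hxQ, ⟨a, ha, hax⟩, -⟩ y ⟨-, -, hy⟩ hne hxy
  exact hy x hxQ (lt_of_le_of_ne hxy hne) a ha hax

theorem preimage_upperShadow (f : α ↪o P) (hf : IsLowerSet (Set.range f)) (Q S : Set P) :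
    f ⁻¹' upperShadow Q S = upperShadow (f ⁻¹' Q) (f ⁻¹' S) := by
  ext y
  refine and_congr_right fun _ => and_congr ⟨?_, ?_⟩ ⟨?_, ?_⟩
  · rintro ⟨x, hx, hxy⟩
    obtain ⟨x, rfl⟩ := hf hxy ⟨y, rfl⟩
    exact ⟨x, hx, f.le_iff_le.1 hxy⟩
  · rintro ⟨x, hx, hxy⟩
    exact ⟨f x, hx, f.le_iff_le.2 hxy⟩
  · intro h z hz hzy x hx hxz
    exact h (f z) hz (f.lt_iff_lt.2 hzy) (f x) hx (f.le_iff_le.2 hxz)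
  · intro h z hz hzy x hx hxz
    obtain ⟨z, rfl⟩ := hf hzy.le ⟨y, rfl⟩
    obtain ⟨x, rfl⟩ := hf hxz ⟨z, rfl⟩
    exact h z hz (f.lt_iff_lt.1 hzy) x hx (f.le_iff_le.1 hxz)

theorem upperShadow_image (f : α ↪o P) (hf : IsLowerSet (Set.range f)) (Q : Set α) (S : Set P) :
    upperShadow (f '' Q) S = f '' upperShadow Q (f ⁻¹' S) := by
  have hrange : upperShadow (f '' Q) S ⊆ Set.range f := fun _ hy => Set.image_subset_range f Q hy.1
  rw [← Set.image_preimage_eq_of_subset hrange, preimage_upperShadow f hf,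
    Set.preimage_image_eq _ f.injective]

end UpperShadow

section Antichains

variable {α β P : Type*} [Fintype α] [PartialOrder α] [Fintype β] [PartialOrder β] [Fintype P]
  [PartialOrder P]

theorem mem_antichains {A : Finset P} : A ∈ antichains P ↔ IsAntichain (· ≤ ·) (A : Set P) := by
  simp only [antichains, Finset.mem_filter, Finset.mem_univ, true_and]

theorem preimage_mem_antichains (f : α ↪o P) {A : Finset P} (hA : A ∈ antichains P) :
    A.preimage f f.injective.injOn ∈ antichains α := by
  rw [mem_antichains, Finset.coe_preimage]
  exact (mem_antichains.1 hA).preimage_relEmbedding f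

theorem disjSum_mem_antichains {A : Finset α} {B : Finset β} (hA : A ∈ antichains α)
    (hB : B ∈ antichains β) : A.disjSum B ∈ antichains (α ⊕ β) := by
  rw [mem_antichains] at *
  rintro (x | x) hx (y | y) hy hne hxy
  · exact hA (Finset.inl_mem_disjSum.1 hx) (Finset.inl_mem_disjSum.1 hy)
      (ne_of_apply_ne Sum.inl hne) (Sum.inl_le_inl_iff.1 hxy)
  · exact Sum.not_inl_le_inr hxy
  · exact Sum.not_inr_le_inl hxy
  · exact hB (Finset.inr_mem_disjSum.1 hx) (Finset.inr_mem_disjSum.1 hy)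
      (ne_of_apply_ne Sum.inr hne) (Sum.inr_le_inr_iff.1 hxy)

/-- The upper shadow `∂_Q A` as a finset. Like the weightings, it is used on all finsets `A`, not
only on antichains. -/
noncomputable def shadow (Q : Set P) (A : Finset P) : Finset P :=
  (upperShadow Q (A : Set P)).toFinite.toFinset

theorem coe_shadow (Q : Set P) (A : Finset P) : (shadow Q A : Set P) = upperShadow Q (A : Set P) :=
  Set.Finite.coe_toFinset _

theorem shadow_mem_antichainsIn (Q : Set P) (A : Finset P) : shadow Q A ∈ antichainsIn Q := by
  classical
  rw [antichainsIn, Finset.mem_filter, mem_antichains, coe_shadow]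
  exact ⟨isAntichain_upperShadow Q A, fun _ hy => hy.1⟩

theorem shadow_image (f : α ↪o P) (hf : IsLowerSet (Set.range f)) (Q : Set α) (A : Finset P) :
    shadow (f '' Q) A = (shadow Q (A.preimage f f.injective.injOn)).map f.toEmbedding := by
  rw [← Finset.coe_inj, Finset.coe_map, coe_shadow, coe_shadow, Finset.coe_preimage]
  exact upperShadow_image f hf Q A

theorem toLeft_shadow (Q : Set (α ⊕ β)) (A : Finset (α ⊕ β)) :
    (shadow Q A).toLeft = shadow (Sum.inl ⁻¹' Q) A.toLeft := by
  rw [← Finset.coe_inj, coe_toLeft, coe_shadow, coe_shadow, coe_toLeft]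
  exact preimage_upperShadow (inlOrderEmbedding α β) isLowerSet_range_inl Q A

theorem toRight_shadow (Q : Set (α ⊕ β)) (A : Finset (α ⊕ β)) :
    (shadow Q A).toRight = shadow (Sum.inr ⁻¹' Q) A.toRight := by
  rw [← Finset.coe_inj, coe_toRight, coe_shadow, coe_shadow, coe_toRight]
  exact preimage_upperShadow (inrOrderEmbedding α β) isLowerSet_range_inr Q A

theorem shadow_disjSum (Q : Set (α ⊕ β)) (A : Finset α) (B : Finset β) :
    shadow Q (A.disjSum B) =
      (shadow (Sum.inl ⁻¹' Q) A).disjSum (shadow (Sum.inr ⁻¹' Q) B) := by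
  rw [Finset.eq_disjSum_iff, toLeft_shadow, toRight_shadow, Finset.toLeft_disjSum,
    Finset.toRight_disjSum]
  exact ⟨rfl, rfl⟩

end Antichains

section AttainableExponents

variable {α β P : Type*} [Fintype α] [PartialOrder α] [Fintype β] [PartialOrder β] [Fintype P]
  [PartialOrder P]

theorem isWeighting_iff {w : Finset P → ℝ} :
    IsWeighting w ↔ w ∈ stdSimplex ℝ (Finset P) ∧ ∀ A ∉ antichains P, w A = 0 := by
  have hsum (h : ∀ A ∉ antichains P, w A = 0) : ∑ A ∈ antichains P, w A = ∑ A, w A :=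
    Finset.sum_subset (Finset.subset_univ _) fun A _ => h A
  constructor
  · rintro ⟨hpos, hsupp, hone⟩
    refine ⟨⟨fun A => ?_, hsum hsupp ▸ hone⟩, hsupp⟩
    by_cases hA : A ∈ antichains P
    exacts [hpos A hA, (hsupp A hA).ge]
  · rintro ⟨⟨hpos, hone⟩, hsupp⟩
    exact ⟨fun A _ => hpos A, hsupp, (hsum hsupp).trans hone⟩

theorem shadowWeight_eq_map {w : stdSimplex ℝ (Finset P)} (hw : ∀ A ∉ antichains P, w A = 0)
    (Q : Set P) (T : Finset P) : shadowWeight w Q T = stdSimplex.map (shadow Q) w T := by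
  classical
  rw [stdSimplex.map_coe, FunOnFinite.linearMap_apply_apply, shadowWeight]
  simp only [← coe_shadow, Finset.coe_inj]
  refine Finset.sum_subset (Finset.filter_subset_filter _ (Finset.subset_univ _)) fun A hA hA' => ?_
  exact hw A fun h => hA' (Finset.mem_filter.2 ⟨h, (Finset.mem_filter.1 hA).2⟩)

theorem critExp_eq_shannonEntropy_div {w : stdSimplex ℝ (Finset P)}
    (hw : ∀ A ∉ antichains P, w A = 0) (Q : Set P) :
    critExp w Q = shannonEntropy (stdSimplex.map (shadow Q) w) / Q.ncard := by
  simp only [critExp, shadowWeight_eq_map hw, shannonEntropy, negMulLog_eq_neg]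
  congr 1
  refine Finset.sum_subset (Finset.subset_univ _) fun T _ hT => ?_
  have hzero : stdSimplex.map (shadow Q) w T = 0 :=
    stdSimplex_map_apply_eq_zero fun A hA => (hT (hA ▸ shadow_mem_antichainsIn Q A)).elim
  rw [hzero, zero_mul, neg_zero]

variable (P) in
/-- The lower bounds for `c_{α,P}` over nonempty subposets that some weighting `α` attains: the set
of which `c_⋆(P)` is the supremum. -/
def attainableExponents : Set ℝ :=
  {c : ℝ | 0 ≤ c ∧ ∃ α : Finset P → ℝ, IsWeighting α ∧
    ∀ Q : Set P, Q.Nonempty → c ≤ critExp α Q}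

theorem critStar_eq_sSup : critStar P = sSup (attainableExponents P) :=
  rfl

theorem mem_attainableExponents {c : ℝ} :
    c ∈ attainableExponents P ↔ 0 ≤ c ∧ ∃ w : stdSimplex ℝ (Finset P),
      (∀ A ∉ antichains P, w A = 0) ∧
        ∀ Q : Set P, c * Q.ncard ≤ shannonEntropy (stdSimplex.map (shadow Q) w) := by
  have key (w : stdSimplex ℝ (Finset P)) (hw : ∀ A ∉ antichains P, w A = 0) (Q : Set P) :
      (Q.Nonempty → c ≤ critExp w Q) ↔
        c * Q.ncard ≤ shannonEntropy (stdSimplex.map (shadow Q) w) := by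
    rcases Q.eq_empty_or_nonempty with rfl | hQ
    · simp only [Set.not_nonempty_empty, false_imp_iff, Set.ncard_empty, Nat.cast_zero, mul_zero,
        shannonEntropy_nonneg]
    · have hcard : (0 : ℝ) < Q.ncard := Nat.cast_pos.2 ((Set.ncard_pos Q.toFinite).2 hQ)
      rw [critExp_eq_shannonEntropy_div hw, le_div_iff₀ hcard, imp_iff_right hQ]
  refine and_congr_right fun _ => ⟨?_, ?_⟩
  · rintro ⟨w, hw, h⟩
    obtain ⟨hmem, hsupp⟩ := isWeighting_iff.1 hw
    exact ⟨⟨w, hmem⟩, hsupp, fun Q => (key ⟨w, hmem⟩ hsupp Q).1 (h Q)⟩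
  · rintro ⟨w, hsupp, h⟩
    exact ⟨w, isWeighting_iff.2 ⟨w.2, hsupp⟩, fun Q => (key w hsupp Q).2 (h Q)⟩

theorem ordConnected_attainableExponents : (attainableExponents P).OrdConnected :=
  ⟨fun _ ha _ ⟨_, w, hw, h⟩ _ hc =>
    ⟨ha.1.trans hc.1, w, hw, fun Q hQ => hc.2.trans (h Q hQ)⟩⟩

theorem isLeast_attainableExponents : IsLeast (attainableExponents P) 0 := by
  classical
  refine ⟨mem_attainableExponents.2 ⟨le_rfl, stdSimplex.vertex ∅, fun A hA => ?_, fun Q => ?_⟩,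
    fun c hc => hc.1⟩
  · refine Pi.single_eq_of_ne (fun h => hA ?_) 1
    rw [h, mem_antichains, Finset.coe_empty]
    exact IsAntichain.empty
  · rw [zero_mul]
    exact shannonEntropy_nonneg _

theorem bddAbove_attainableExponents [Nonempty P] : BddAbove (attainableExponents P) := by
  refine ⟨log (Fintype.card (Finset P)), fun c hc => ?_⟩
  obtain ⟨hc₀, w, -, h⟩ := mem_attainableExponents.1 hc
  have hcard : (1 : ℝ) ≤ (Set.univ : Set P).ncard :=
    Nat.one_le_cast.2 ((Set.ncard_pos Set.finite_univ).2 Set.univ_nonempty)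
  calc c ≤ c * (Set.univ : Set P).ncard := le_mul_of_one_le_right hc₀ hcard
    _ ≤ shannonEntropy (stdSimplex.map (shadow Set.univ) w) := h Set.univ
    _ ≤ log (Fintype.card (Finset P)) := shannonEntropy_le_log_card _

theorem attainableExponents_subset_of_isLowerSet_range (f : α ↪o P)
    (hf : IsLowerSet (Set.range f)) : attainableExponents P ⊆ attainableExponents α := by
  intro c hc
  obtain ⟨hc₀, w, hw, h⟩ := mem_attainableExponents.1 hc
  let trace (A : Finset P) : Finset α := A.preimage f f.injective.injOn
  refine mem_attainableExponents.2 ⟨hc₀, stdSimplex.map trace w, fun B hB => ?_, fun Q => ?_⟩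
  · refine stdSimplex_map_apply_eq_zero fun A hA => hw A fun hA' => hB ?_
    exact hA ▸ preimage_mem_antichains f hA'
  · have hshadow : shadow (f '' Q) = Finset.map f.toEmbedding ∘ shadow Q ∘ trace :=
      funext fun A => shadow_image f hf Q A
    calc c * Q.ncard = c * (f '' Q).ncard := by rw [Set.ncard_image_of_injective Q f.injective]
      _ ≤ shannonEntropy (stdSimplex.map (shadow (f '' Q)) w) := h (f '' Q)
      _ = shannonEntropy (stdSimplex.map (shadow Q) (stdSimplex.map trace w)) := by
        rw [hshadow, ← stdSimplex.map_comp_apply,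
          shannonEntropy_map_of_injective (Finset.map_injective _), stdSimplex.map_comp_apply]

theorem attainableExponents_congr (e : α ≃o β) :
    attainableExponents α = attainableExponents β :=
  Set.Subset.antisymm
    (attainableExponents_subset_of_isLowerSet_range e.symm.toOrderEmbedding
      (e.symm.surjective.range_eq ▸ isLowerSet_univ))
    (attainableExponents_subset_of_isLowerSet_range e.toOrderEmbedding
      (e.surjective.range_eq ▸ isLowerSet_univ))

theorem inter_attainableExponents_subset :
    attainableExponents α ∩ attainableExponents β ⊆ attainableExponents (α ⊕ β) := by
  rintro c ⟨hcα, hcβ⟩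
  obtain ⟨hc₀, v, hv, hvQ⟩ := mem_attainableExponents.1 hcα
  obtain ⟨-, w, hw, hwQ⟩ := mem_attainableExponents.1 hcβ
  let glue : Finset α × Finset β → Finset (α ⊕ β) := Finset.sumEquiv.symm
  have hglue : Function.Injective glue := Finset.sumEquiv.symm.injective
  refine mem_attainableExponents.2
    ⟨hc₀, stdSimplex.map glue (prodWeighting v w), fun A hA => ?_, fun Q => ?_⟩
  · refine stdSimplex_map_apply_eq_zero fun ⟨B, C⟩ hBC => ?_
    rw [prodWeighting_apply, mul_eq_zero]
    by_contra! hne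
    exact hA (hBC ▸ disjSum_mem_antichains (not_imp_comm.1 (hv B) hne.1)
      (not_imp_comm.1 (hw C) hne.2))
  · have hshadow : shadow Q ∘ glue =
        glue ∘ Prod.map (shadow (Sum.inl ⁻¹' Q)) (shadow (Sum.inr ⁻¹' Q)) :=
      funext fun p => shadow_disjSum Q p.1 p.2
    calc c * Q.ncard = c * (Sum.inl ⁻¹' Q).ncard + c * (Sum.inr ⁻¹' Q).ncard := by
          rw [← ncard_preimage_inl_add_ncard_preimage_inr Q.toFinite, Nat.cast_add, mul_add]
      _ ≤ shannonEntropy (stdSimplex.map (shadow (Sum.inl ⁻¹' Q)) v) +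
          shannonEntropy (stdSimplex.map (shadow (Sum.inr ⁻¹' Q)) w) := add_le_add (hvQ _) (hwQ _)
      _ = shannonEntropy (stdSimplex.map (shadow Q) (stdSimplex.map glue (prodWeighting v w))) := by
          rw [stdSimplex.map_comp_apply, hshadow, ← stdSimplex.map_comp_apply,
            shannonEntropy_map_of_injective hglue, map_prodMap_prodWeighting,
            shannonEntropy_prodWeighting]

theorem attainableExponents_sum :
    attainableExponents (α ⊕ β) = attainableExponents α ∩ attainableExponents β :=
  Set.Subset.antisymm
    (Set.subset_inter
      (attainableExponents_subset_of_isLowerSet_range (inlOrderEmbedding α β) isLowerSet_range_inl)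
      (attainableExponents_subset_of_isLowerSet_range (inrOrderEmbedding α β) isLowerSet_range_inr))
    inter_attainableExponents_subset

end AttainableExponents

section CritStar

variable {α β : Type*} [Fintype α] [PartialOrder α] [Fintype β] [PartialOrder β]

theorem critStar_congr (e : α ≃o β) : critStar α = critStar β := by
  rw [critStar_eq_sSup, critStar_eq_sSup, attainableExponents_congr e]

theorem critStar_sum [Nonempty α] [Nonempty β] :
    critStar (α ⊕ β) = min (critStar α) (critStar β) := by
  simp only [critStar_eq_sSup, attainableExponents_sum]
  exact csSup_inter_eq_min ordConnected_attainableExponents ordConnected_attainableExponents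
    isLeast_attainableExponents isLeast_attainableExponents bddAbove_attainableExponents
    bddAbove_attainableExponents

/-- A partition of a poset into two mutually incomparable parts exhibits it as the disjoint union of
these parts. -/
noncomputable def sumSubtypeOrderIso {P : Type*} [PartialOrder P] {p q : P → Prop}
    (hcover : ∀ x, p x ∨ q x) (hincomp : ∀ x, p x → ∀ y, q y → ¬ x ≤ y ∧ ¬ y ≤ x) :
    {x // p x} ⊕ {x // q x} ≃o P :=
  RelIso.ofSurjective
    (OrderEmbedding.ofMapLEIff (Sum.elim Subtype.val Subtype.val) (by
      rintro (⟨x, hx⟩ | ⟨x, hx⟩) (⟨y, hy⟩ | ⟨y, hy⟩)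
      · exact (Sum.inl_le_inl_iff (α := {x // p x}) (β := {x // q x})).symm
      · exact iff_of_false (hincomp x hx y hy).1 Sum.not_inl_le_inr
      · exact iff_of_false (hincomp y hy x hx).2 Sum.not_inr_le_inl
      · exact (Sum.inr_le_inr_iff (α := {x // p x}) (β := {x // q x})).symm))
    fun x => (hcover x).elim (fun hx => ⟨.inl ⟨x, hx⟩, rfl⟩) fun hx => ⟨.inr ⟨x, hx⟩, rfl⟩

end CritStar

/-- If a finite poset `P` is partitioned into two nonempty sets `P₁`, `P₂` of mutually
incomparable elements (each with the induced order), then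
`c_⋆(P) = min (c_⋆(P₁)) (c_⋆(P₂))`. -/
theorem stmt10 (P : Type) [Fintype P] [PartialOrder P]
    (P₁ P₂ : Finset P) (h1 : P₁.Nonempty) (h2 : P₂.Nonempty)
    (hdisj : Disjoint P₁ P₂) (hunion : ∀ x : P, x ∈ P₁ ∨ x ∈ P₂)
    (hincomp : ∀ x ∈ P₁, ∀ y ∈ P₂, ¬ x ≤ y ∧ ¬ y ≤ x) :
    critStar P = min (critStar {x // x ∈ P₁}) (critStar {x // x ∈ P₂}) := by
  have : Nonempty {x // x ∈ P₁} := h1.to_subtype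
  have : Nonempty {x // x ∈ P₂} := h2.to_subtype
  rw [← critStar_sum, critStar_congr (sumSubtypeOrderIso hunion hincomp)]
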